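/- arXiv:1410.3166 — 2 statements merged into one kernel-verified Lean document; each statement's English description precedes it below -/
import Mathlib

section
/- Let V be a finite-dimensional K-vector space with a direct sum decomposition V = ⊕_{l=0}^{L} V_l, and let f_1,…,f_r be K-linear endomorphisms of V such that f_i(V_l) ⊆ ⊕_{u=l+1}^{L} V_u for all i and l (in particular f_i(V_L) = 0). Then: (i) every composition f_{i_{L+1}} ∘ ⋯ ∘ f_{i_1} of L+1 of these maps is the zero map, so that V carries a (unique) Λ-module structure M in which the image of the generator X_i acts as f_i; (ii) J^l M ⊆ ⊕_{u=l}^{L} V_u for all 0 ≤ l ≤ L; consequently (dim_K V_0,…,dim_K V_L) ≼ rad(M) in the dominance order. -/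
noncomputable section

/-- The relation on the free algebra killing all products of `L+1` generators. -/
def TruncRel (K : Type*) [Field K] (r L : ℕ) :
    FreeAlgebra K (Fin r) → FreeAlgebra K (Fin r) → Prop := fun a b =>
  (∃ f : Fin (L + 1) → Fin r, a = (List.ofFn fun j => FreeAlgebra.ι K (f j)).prod) ∧ b = 0

/-- The local truncated path algebra with `r` loops and Loewy length `L+1`:
the quotient of `K⟨X_1,…,X_r⟩` by the two-sided ideal generated by all products
of `L+1` generators. -/
def TruncAlg (K : Type*) [Field K] (r L : ℕ) : Type _ := RingQuot (TruncRel K r L)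

instance (K : Type*) [Field K] (r L : ℕ) : Ring (TruncAlg K r L) :=
  inferInstanceAs (Ring (RingQuot _))

instance (K : Type*) [Field K] (r L : ℕ) : Algebra K (TruncAlg K r L) :=
  inferInstanceAs (Algebra K (RingQuot _))

/-- The images of the generators `X i` in the truncated algebra. -/
def gen (K : Type*) [Field K] (r L : ℕ) (i : Fin r) : TruncAlg K r L :=
  RingQuot.mkAlgHom K (TruncRel K r L) (FreeAlgebra.ι K i)

/-- The two-sided ideal `J` of `Λ` generated by the images of `X_1,…,X_r`,
realized as a `K`-submodule of `Λ`. -/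
def Jrad (K : Type*) [Field K] (r L : ℕ) : Submodule K (TruncAlg K r L) :=
  ⊤ * Submodule.span K (Set.range (gen K r L)) * ⊤

/-- `J^l M`, the submodule of `M` given by the action of `J^l`. -/
def jpow (K : Type*) [Field K] (r L : ℕ) (M : Type*) [AddCommGroup M] [Module K M]
    [Module (TruncAlg K r L) M] [IsScalarTower K (TruncAlg K r L) M] (l : ℕ) :
    Submodule (TruncAlg K r L) M :=
  Submodule.span (TruncAlg K r L)
    {x : M | ∃ a ∈ (Jrad K r L ^ l : Submodule K (TruncAlg K r L)), ∃ m : M, x = a • m}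

/-- The socle of a module: the supremum of all simple submodules. -/
def socle (R N : Type*) [Ring R] [AddCommGroup N] [Module R N] : Submodule R N :=
  sSup {p : Submodule R N | IsSimpleModule R ↥p}

/-- The socle series: `socSeries R M l` is `soc_{l-1} M`, so `socSeries R M 0 = soc_{-1} M = ⊥`
and `socSeries R M (l+1) = soc_l M` is the preimage in `M` of `soc (M / soc_{l-1} M)`. -/
def socSeries (R M : Type*) [Ring R] [AddCommGroup M] [Module R M] : ℕ → Submodule R M
  | 0 => ⊥
  | l + 1 => Submodule.comap (socSeries R M l).mkQ (socle R (M ⧸ socSeries R M l))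

/-- Dimension of the subquotient `q / (p ⊓ q)`; for `p ≤ q` this is `dim (q/p)`. -/
def quotDim (K M : Type*) [Field K] [AddCommGroup M] [Module K M]
    (p q : Submodule K M) : ℕ :=
  Module.finrank K (↥q ⧸ Submodule.comap q.subtype p)

/-- The radical layering `rad(M) = (dim_K J^l M / J^{l+1} M)_{l=0,…,L}`. -/
def radLayering (K : Type*) [Field K] (r L : ℕ) (M : Type*) [AddCommGroup M] [Module K M]
    [Module (TruncAlg K r L) M] [IsScalarTower K (TruncAlg K r L) M] : Fin (L + 1) → ℕ :=
  fun l => quotDim K M ((jpow K r L M ((l : ℕ) + 1)).restrictScalars K)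
    ((jpow K r L M (l : ℕ)).restrictScalars K)

/-- The socle layering `socseq(M) = (dim_K soc_l M / soc_{l-1} M)_{l=0,…,L}`. -/
def socLayering (K : Type*) [Field K] (r L : ℕ) (M : Type*) [AddCommGroup M] [Module K M]
    [Module (TruncAlg K r L) M] [IsScalarTower K (TruncAlg K r L) M] : Fin (L + 1) → ℕ :=
  fun l => quotDim K M ((socSeries (TruncAlg K r L) M (l : ℕ)).restrictScalars K)
    ((socSeries (TruncAlg K r L) M ((l : ℕ) + 1)).restrictScalars K)

/-- The dominance order on `ℕ^{L+1}`: `a ≼ b` iff all partial sums satisfy `≤`. -/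
def DomLE (L : ℕ) (a b : Fin (L + 1) → ℕ) : Prop :=
  ∀ l : Fin (L + 1), ∑ j ∈ Finset.Iic l, a j ≤ ∑ j ∈ Finset.Iic l, b j

/-- `reverse (a_0, …, a_L) = (a_L, …, a_0)`. -/
def revTuple (L : ℕ) (a : Fin (L + 1) → ℕ) : Fin (L + 1) → ℕ := fun l => a l.rev

/-- Given a `K`-algebra morphism `φ : Λ → End_K V` (a `Λ`-module structure on `V`),
the `K`-subspace `J^l V = {Σ φ(a_i)(m_i) | a_i ∈ J^l}`. -/
def phiLayer (K : Type*) [Field K] (r L : ℕ) (V : Type*) [AddCommGroup V] [Module K V]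
    (φ : TruncAlg K r L →ₐ[K] Module.End K V) (l : ℕ) : Submodule K V :=
  Submodule.span K
    {x : V | ∃ a ∈ (Jrad K r L ^ l : Submodule K (TruncAlg K r L)), ∃ m : V, x = φ a m}

/-- The radical layering of the `Λ`-module structure on `V` given by `φ`. -/
def phiRad (K : Type*) [Field K] (r L : ℕ) (V : Type*) [AddCommGroup V] [Module K V]
    (φ : TruncAlg K r L →ₐ[K] Module.End K V) : Fin (L + 1) → ℕ :=
  fun l => quotDim K V (phiLayer K r L V φ ((l : ℕ) + 1)) (phiLayer K r L V φ (l : ℕ))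

/-!
The tails `F n = ⨁_{u ≥ n} V_u` form a descending filtration with `F 0 = V` and `F (L + 1) = 0`, and
the hypothesis says that each `f i` has filtration degree `1`. Degrees add under composition. Hence
products of `L + 1` of the `f i` vanish, and every element of `J ^ l` acts with degree `l`, so that
`J ^ l V ⊆ F l`. The partial sums of the two dimension vectors up to `l` are
`dim V - dim F (l + 1)` and `dim V - dim J ^ (l + 1) V`, so this inclusion gives the dominance.
-/

section FilteredEnd

variable {R M : Type*} [CommSemiring R] [AddCommMonoid M] [Module R M] {F : ℕ → Submodule R M}

/-- The endomorphisms of degree at least `d` with respect to a descending filtration `F`, that is,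
those mapping `F n` into `F (n + d)` for all `n`. They measure how far elements of `J ^ d` push
vectors down the filtration. -/
def filteredEnd (F : ℕ → Submodule R M) (d : ℕ) : Submodule R (Module.End R M) :=
  ⨅ n, Submodule.compatibleMaps (F n) (F (n + d))

theorem mem_filteredEnd {d : ℕ} {g : Module.End R M} :
    g ∈ filteredEnd F d ↔ ∀ n, ∀ v ∈ F n, g v ∈ F (n + d) :=
  Submodule.mem_iInf _

theorem filteredEnd_antitone (hF : Antitone F) : Antitone (filteredEnd F) := fun _ _ hde _ hg =>
  mem_filteredEnd.2 fun n v hv => hF (Nat.add_le_add_left hde n) (mem_filteredEnd.1 hg n v hv)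

theorem one_mem_filteredEnd : 1 ∈ filteredEnd F 0 :=
  mem_filteredEnd.2 fun _ _ hv => hv

theorem filteredEnd_mul_le (d e : ℕ) :
    filteredEnd F d * filteredEnd F e ≤ filteredEnd F (d + e) := by
  refine Submodule.mul_le.2 fun g hg h hh => mem_filteredEnd.2 fun n v hv => ?_
  rw [add_comm d e, ← add_assoc]
  exact mem_filteredEnd.1 hg _ _ (mem_filteredEnd.1 hh n v hv)

theorem filteredEnd_pow_le (d k : ℕ) : filteredEnd F d ^ k ≤ filteredEnd F (d * k) := by
  induction k with
  | zero => exact Submodule.one_le.2 one_mem_filteredEnd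
  | succ k ih =>
    rw [pow_succ]
    exact (mul_le_mul_left ih _).trans (filteredEnd_mul_le (d * k) d)

theorem list_ofFn_prod_mem_filteredEnd {d k : ℕ} {g : Fin k → Module.End R M}
    (hg : ∀ j, g j ∈ filteredEnd F d) : (List.ofFn g).prod ∈ filteredEnd F (d * k) :=
  filteredEnd_pow_le d k <| Submodule.pow_subset_pow _ <| Set.mem_pow.2 ⟨fun j => ⟨g j, hg j⟩, rfl⟩

theorem eq_zero_of_mem_filteredEnd {d : ℕ} {g : Module.End R M} (h0 : F 0 = ⊤) (hd : F d = ⊥)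
    (hg : g ∈ filteredEnd F d) : g = 0 := by
  ext v
  have hv : g v ∈ F (0 + d) := mem_filteredEnd.1 hg 0 v (h0 ▸ Submodule.mem_top)
  rwa [zero_add, hd] at hv

end FilteredEnd

section TailSup

section Lattice

variable {α : Type*} [CompleteLattice α] {N : ℕ}

/-- The tail `⨆_{u ≥ n} x u` of a finite family, which is `⨁_{u ≥ n} V_u` for the family of
summands of `V`. The index `n` is a natural number so that the tail from `N` on, which is `⊥`, is
included. -/
def tailSup (x : Fin N → α) (n : ℕ) : α :=
  ⨆ (u : Fin N) (_ : n ≤ u), x u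

theorem le_tailSup (x : Fin N → α) {n : ℕ} {u : Fin N} (h : n ≤ u) : x u ≤ tailSup x n :=
  le_iSup₂_of_le u h le_rfl

theorem tailSup_antitone (x : Fin N → α) : Antitone (tailSup x) := fun _ _ hmn =>
  iSup₂_le fun _ hu => le_tailSup x (hmn.trans hu)

theorem tailSup_zero (x : Fin N → α) : tailSup x 0 = ⨆ u, x u := by
  simp [tailSup]

theorem tailSup_eq_bot (x : Fin N → α) {n : ℕ} (h : N ≤ n) : tailSup x n = ⊥ :=
  eq_bot_iff.2 <| iSup₂_le fun u hu => absurd (h.trans hu) u.isLt.not_ge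

theorem sup_tailSup_succ (x : Fin N → α) (l : Fin N) :
    x l ⊔ tailSup x (l + 1) = tailSup x l := by
  refine le_antisymm (sup_le (le_tailSup x le_rfl) (tailSup_antitone x l.val.le_succ)) ?_
  refine iSup₂_le fun u hu => ?_
  rcases hu.eq_or_lt with heq | hlt
  · exact Fin.ext heq ▸ le_sup_left
  · exact (le_tailSup x hlt).trans le_sup_right

theorem disjoint_tailSup_succ {x : Fin N → α} (hx : iSupIndep x) (l : Fin N) :
    Disjoint (x l) (tailSup x (l + 1)) :=
  hx.disjoint_biSup (y := Set.Ioi l) Set.self_notMem_Ioi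

end Lattice

theorem mem_filteredEnd_tailSup {R M : Type*} [CommSemiring R] [AddCommMonoid M] [Module R M]
    {N d : ℕ} {p : Fin N → Submodule R M} {g : Module.End R M}
    (hg : ∀ l, (p l).map g ≤ tailSup p (l + d)) : g ∈ filteredEnd (tailSup p) d := by
  have hle (n : ℕ) : tailSup p n ≤ (tailSup p (n + d)).comap g :=
    iSup₂_le fun u hu => Submodule.map_le_iff_le_comap.1 <|
      (hg u).trans (tailSup_antitone p (Nat.add_le_add_right hu d))
  exact mem_filteredEnd.2 fun n _ hv => hle n hv

end TailSup

namespace TruncAlg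

variable {K : Type*} [Field K] {r L : ℕ} {A : Type*} [Semiring A] [Algebra K A]

theorem adjoin_range_gen : Algebra.adjoin K (Set.range (gen K r L)) = ⊤ := by
  let π : FreeAlgebra K (Fin r) →ₐ[K] TruncAlg K r L := RingQuot.mkAlgHom K (TruncRel K r L)
  calc Algebra.adjoin K (Set.range (gen K r L))
      = (Algebra.adjoin K (Set.range (FreeAlgebra.ι K))).map π := by
        rw [AlgHom.map_adjoin, ← Set.range_comp]; rfl
    _ = ⊤ := by
        rw [FreeAlgebra.adjoin_range_ι, Algebra.map_top, AlgHom.range_eq_top]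
        exact RingQuot.mkAlgHom_surjective K _

theorem range_le {φ : TruncAlg K r L →ₐ[K] A} {S : Subalgebra K A}
    (h : ∀ i, φ (gen K r L i) ∈ S) : φ.range ≤ S := by
  rw [← Algebra.map_top, ← adjoin_range_gen, AlgHom.map_adjoin, Algebra.adjoin_le_iff]
  rintro _ ⟨_, ⟨i, rfl⟩, rfl⟩
  exact h i

theorem existsUnique_algHom (f : Fin r → A)
    (hf : ∀ g : Fin (L + 1) → Fin r, (List.ofFn fun j => f (g j)).prod = 0) :
    ∃! φ : TruncAlg K r L →ₐ[K] A, ∀ i, φ (gen K r L i) = f i := by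
  have hrel : ∀ ⦃a b⦄, TruncRel K r L a b → FreeAlgebra.lift K f a = FreeAlgebra.lift K f b := by
    rintro _ _ ⟨⟨g, rfl⟩, rfl⟩
    simpa only [map_zero, map_list_prod, List.map_ofFn, Function.comp_def,
      FreeAlgebra.lift_ι_apply] using hf g
  have hlift (i : Fin r) :
      RingQuot.liftAlgHom K ⟨FreeAlgebra.lift K f, hrel⟩ (gen K r L i) = f i :=
    (RingQuot.liftAlgHom_mkAlgHom_apply K _ hrel _).trans (FreeAlgebra.lift_ι_apply f i)
  refine ⟨RingQuot.liftAlgHom K ⟨FreeAlgebra.lift K f, hrel⟩, hlift, fun ψ hψ => ?_⟩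
  refine AlgHom.ext_of_adjoin_eq_top adjoin_range_gen ?_
  rintro _ ⟨i, rfl⟩
  exact (hψ i).trans (hlift i).symm

end TruncAlg

section PhiLayer

variable {K : Type*} [Field K] {r L : ℕ} {V : Type*} [AddCommGroup V] [Module K V]
  {φ : TruncAlg K r L →ₐ[K] Module.End K V} {F : ℕ → Submodule K V}

theorem map_Jrad_le_filteredEnd (hF : Antitone F)
    (hφ : ∀ i, φ (gen K r L i) ∈ filteredEnd F 1) :
    (Jrad K r L).map φ.toLinearMap ≤ filteredEnd F 1 := by
  have htop : (⊤ : Submodule K (TruncAlg K r L)).map φ.toLinearMap ≤ filteredEnd F 0 := by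
    let S := (filteredEnd F 0).toSubalgebra one_mem_filteredEnd
      fun _ _ hg hh => filteredEnd_mul_le 0 0 (Submodule.mul_mem_mul hg hh)
    have hS : φ.range ≤ S := TruncAlg.range_le fun i => filteredEnd_antitone hF zero_le_one (hφ i)
    rintro _ ⟨a, -, rfl⟩
    exact hS ⟨a, rfl⟩
  have hgen : (Submodule.span K (Set.range (gen K r L))).map φ.toLinearMap ≤ filteredEnd F 1 := by
    rw [Submodule.map_span_le]
    rintro _ ⟨i, rfl⟩
    exact hφ i
  calc (Jrad K r L).map φ.toLinearMap
      ≤ filteredEnd F 0 * filteredEnd F 1 * filteredEnd F 0 := by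
        rw [Jrad, Submodule.map_mul, Submodule.map_mul]
        exact mul_le_mul' (mul_le_mul' htop hgen) htop
    _ ≤ filteredEnd F (0 + 1) * filteredEnd F 0 := mul_le_mul_left (filteredEnd_mul_le 0 1) _
    _ ≤ filteredEnd F (0 + 1 + 0) := filteredEnd_mul_le _ _

theorem phiLayer_le_of_gen_mem_filteredEnd (hF : Antitone F) (h0 : F 0 = ⊤)
    (hφ : ∀ i, φ (gen K r L i) ∈ filteredEnd F 1) (l : ℕ) : phiLayer K r L V φ l ≤ F l := by
  have hpow : (Jrad K r L ^ l).map φ.toLinearMap ≤ filteredEnd F l := by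
    rw [Submodule.map_pow]
    simpa only [one_mul] using
      (pow_le_pow_left' (map_Jrad_le_filteredEnd hF hφ) l).trans (filteredEnd_pow_le 1 l)
  refine Submodule.span_le.2 ?_
  rintro _ ⟨a, ha, v, rfl⟩
  have hv : φ a v ∈ F (0 + l) :=
    mem_filteredEnd.1 (hpow (Submodule.mem_map_of_mem ha)) 0 v (h0 ▸ Submodule.mem_top)
  rwa [zero_add] at hv

theorem phiLayer_zero (φ : TruncAlg K r L →ₐ[K] Module.End K V) : phiLayer K r L V φ 0 = ⊤ :=
  eq_top_iff.2 fun v _ => Submodule.subset_span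
    ⟨1, pow_zero (Jrad K r L) ▸ Submodule.one_le.1 le_rfl, v, by rw [map_one, Module.End.one_apply]⟩

theorem phiLayer_succ_le (φ : TruncAlg K r L →ₐ[K] Module.End K V) (l : ℕ) :
    phiLayer K r L V φ (l + 1) ≤ phiLayer K r L V φ l := by
  refine Submodule.span_le.2 ?_
  rintro _ ⟨a, ha, v, rfl⟩
  rw [pow_succ] at ha
  induction ha using Submodule.mul_induction_on' with
  | mem_mul_mem b hb c _ =>
    exact Submodule.subset_span ⟨b, hb, φ c v, by rw [map_mul, Module.End.mul_apply]⟩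
  | add a _ b _ iha ihb =>
    rw [map_add]
    exact Submodule.add_mem _ iha ihb

end PhiLayer

section Dominance

theorem sum_Iic_add_eq_of_add_succ_eq {A : Type*} [AddCommMonoid A] {n : ℕ} {a : Fin n → A}
    {d : ℕ → A} (h : ∀ j : Fin n, a j + d (j + 1) = d j) (l : Fin n) :
    ∑ j ∈ Finset.Iic l, a j + d (l + 1) = d 0 := by
  obtain ⟨k, hk⟩ := l
  induction k with
  | zero =>
    have hIic : Finset.Iic (⟨0, hk⟩ : Fin n) = {⟨0, hk⟩} := by
      ext j; simp [Fin.le_def, Fin.ext_iff]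
    rw [hIic, Finset.sum_singleton]
    exact h ⟨0, hk⟩
  | succ k ih =>
    have hIio : Finset.Iio (⟨k + 1, hk⟩ : Fin n) = Finset.Iic ⟨k, k.lt_succ_self.trans hk⟩ := by
      ext j; simp [Fin.lt_def, Fin.le_def]
    rw [← Finset.sum_Iio_add_eq_sum_Iic, hIio, add_assoc, h ⟨k + 1, hk⟩]
    exact ih _

theorem domLE_of_add_succ_eq {L : ℕ} {a b : Fin (L + 1) → ℕ} {d e : ℕ → ℕ}
    (ha : ∀ j : Fin (L + 1), a j + d (j + 1) = d j) (hb : ∀ j : Fin (L + 1), b j + e (j + 1) = e j)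
    (h0 : d 0 = e 0) (hed : ∀ n, e n ≤ d n) : DomLE L a b := by
  intro l
  have hsum_a := sum_Iic_add_eq_of_add_succ_eq ha l
  have hsum_b := sum_Iic_add_eq_of_add_succ_eq hb l
  have htail := hed (l + 1)
  omega

variable {K : Type*} [Field K] {V : Type*} [AddCommGroup V] [Module K V]

theorem quotDim_add_finrank {p q : Submodule K V} [FiniteDimensional K q] (h : p ≤ q) :
    quotDim K V p q + Module.finrank K p = Module.finrank K q := by
  rw [quotDim, ← (Submodule.comapSubtypeEquivOfLe h).finrank_eq]
  exact Submodule.finrank_quotient_add_finrank _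

theorem finrank_add_finrank_tailSup_succ [FiniteDimensional K V] {N : ℕ}
    {p : Fin N → Submodule K V} (hp : iSupIndep p) (l : Fin N) :
    Module.finrank K (p l) + Module.finrank K ↥(tailSup p (l + 1)) =
      Module.finrank K ↥(tailSup p l) := by
  have hinf : p l ⊓ tailSup p (l + 1) = ⊥ := (disjoint_tailSup_succ hp l).eq_bot
  rw [← Submodule.finrank_sup_add_finrank_inf_eq, hinf, finrank_bot, add_zero, sup_tailSup_succ]

theorem domLE_finrank_phiRad [FiniteDimensional K V] {r L : ℕ}
    {φ : TruncAlg K r L →ₐ[K] Module.End K V} {p : Fin (L + 1) → Submodule K V}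
    (hspan : ⨆ u, p u = ⊤) (hind : iSupIndep p)
    (hle : ∀ n, phiLayer K r L V φ n ≤ tailSup p n) :
    DomLE L (fun l => Module.finrank K (p l)) (phiRad K r L V φ) :=
  domLE_of_add_succ_eq (d := fun n => Module.finrank K ↥(tailSup p n))
    (e := fun n => Module.finrank K ↥(phiLayer K r L V φ n))
    (finrank_add_finrank_tailSup_succ hind)
    (fun j => quotDim_add_finrank (phiLayer_succ_le φ j))
    (by rw [tailSup_zero, hspan, phiLayer_zero])
    (fun n => Submodule.finrank_mono (hle n))

end Dominance

theorem stmt14_general {K : Type*} [Field K] {r L : ℕ} {V : Type*} [AddCommGroup V] [Module K V]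
    {Vsub : Fin (L + 1) → Submodule K V} (hspan : ⨆ u, Vsub u = ⊤) (f : Fin r → Module.End K V)
    (hf : ∀ (i : Fin r) (l : Fin (L + 1)),
      (Vsub l).map (f i) ≤ ⨆ (u : Fin (L + 1)) (_ : l < u), Vsub u) :
    (∀ g : Fin (L + 1) → Fin r, (List.ofFn fun j => f (g j)).prod = 0) ∧
    (∃! φ : TruncAlg K r L →ₐ[K] Module.End K V, ∀ i, φ (gen K r L i) = f i) ∧
    (∀ φ : TruncAlg K r L →ₐ[K] Module.End K V, (∀ i, φ (gen K r L i) = f i) →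
      (∀ l : Fin (L + 1),
        phiLayer K r L V φ (l : ℕ) ≤ ⨆ (u : Fin (L + 1)) (_ : l ≤ u), Vsub u) ∧
      (FiniteDimensional K V → iSupIndep Vsub →
        DomLE L (fun l => Module.finrank K ↥(Vsub l)) (phiRad K r L V φ))) := by
  have htop : tailSup Vsub 0 = ⊤ := (tailSup_zero Vsub).trans hspan
  have hdeg (i : Fin r) : f i ∈ filteredEnd (tailSup Vsub) 1 := mem_filteredEnd_tailSup (hf i)
  have hprod (g : Fin (L + 1) → Fin r) : (List.ofFn fun j => f (g j)).prod = 0 :=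
    eq_zero_of_mem_filteredEnd htop (tailSup_eq_bot Vsub (one_mul (L + 1)).ge)
      (list_ofFn_prod_mem_filteredEnd fun j => hdeg (g j))
  refine ⟨hprod, TruncAlg.existsUnique_algHom f hprod, fun φ hφ => ?_⟩
  have hlayer : ∀ n, phiLayer K r L V φ n ≤ tailSup Vsub n :=
    phiLayer_le_of_gen_mem_filteredEnd (tailSup_antitone Vsub) htop fun i => hφ i ▸ hdeg i
  exact ⟨fun l => hlayer l, fun _ hind => domLE_finrank_phiRad hspan hind hlayer⟩

/-- Let `V = ⊕_{l=0}^L V_l` and `f_1,…,f_r` endomorphisms with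
`f_i(V_l) ⊆ ⊕_{u>l} V_u`. Then (i) every composition of `L+1` of the `f_i` vanishes, so `V`
carries a unique `Λ`-module structure in which the generator `X_i` acts as `f_i`;
(ii) for this structure, `J^l V ⊆ ⊕_{u≥l} V_u` for all `0 ≤ l ≤ L`, and consequently
`(dim V_0,…,dim V_L) ≼ rad(V)` in the dominance order. -/
theorem stmt14 (K : Type) [Field K] [IsAlgClosed K] (r L : ℕ) (hr : 0 < r) (hL : 0 < L)
    (V : Type) [AddCommGroup V] [Module K V] [FiniteDimensional K V]
    (Vsub : Fin (L + 1) → Submodule K V) (hdec : DirectSum.IsInternal Vsub)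
    (f : Fin r → Module.End K V)
    (hf : ∀ (i : Fin r) (l : Fin (L + 1)),
      (Vsub l).map (f i) ≤ ⨆ (u : Fin (L + 1)) (_ : l < u), Vsub u) :
    (∀ g : Fin (L + 1) → Fin r, (List.ofFn fun j => f (g j)).prod = 0) ∧
    (∃! φ : TruncAlg K r L →ₐ[K] Module.End K V, ∀ i, φ (gen K r L i) = f i) ∧
    (∀ φ : TruncAlg K r L →ₐ[K] Module.End K V, (∀ i, φ (gen K r L i) = f i) →
      (∀ l : Fin (L + 1),
        phiLayer K r L V φ (l : ℕ) ≤ ⨆ (u : Fin (L + 1)) (_ : l ≤ u), Vsub u) ∧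
      DomLE L (fun l => Module.finrank K ↥(Vsub l)) (phiRad K r L V φ)) := by
  have ⟨hprod, hex, hφ⟩ := stmt14_general hdec.submodule_iSup_eq_top f hf
  exact ⟨hprod, hex, fun φ h =>
    (hφ φ h).imp_right fun hdom => hdom inferInstance hdec.submodule_iSupIndep⟩
end
end

section
/- Let Λ' be the local truncated path algebra with r loops and Loewy length 2, i.e., the quotient of the free algebra K⟨X_1,…,X_r⟩ by the two-sided ideal generated by all products X_i X_j of two generators, and let J' be its (square-zero) Jacobson radical, generated by the images of X_1,…,X_r. If M is a finite-dimensional Λ'-module with dim_K(M/J'M) > r · dim_K(J'M), then M has a direct summand isomorphic to the unique simple Λ'-module Λ'/J'. -/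
noncomputable section

/-!
Let `I` be the left ideal of `Λ'` generated by `X_1, …, X_r`, so that `Λ' = K + I` and `J'M = IM`.
The common kernel of the `r` maps `X_i : M → IM` has codimension at most `r · dim IM`, so the
dimension hypothesis keeps it from lying inside `IM`: some `x ∉ IM` is killed by `I`. As
`Λ'` acts on such an `x` and on `M / IM` through scalars only, `Λ' x = K x ≅ Λ' / I`, and every
`K`-subspace containing `IM` is a submodule. Any `K`-complement of `K x` that contains `IM` thus
splits off `K x`.
-/

section CodisjointOne

variable {K A : Type*} [CommRing K] [Ring A] [Algebra K A]

theorem codisjoint_one_span_of_adjoin_eq_top {s : Set A} (hs : Algebra.adjoin K s = ⊤) :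
    Codisjoint 1 ((Ideal.span s).restrictScalars K) := by
  set S : Submodule K A := 1 ⊔ (Ideal.span s).restrictScalars K with hS
  have span_le : (Ideal.span s).restrictScalars K ≤ S := le_sup_right
  rw [codisjoint_iff_le_sup, ← hS]
  rintro a -
  have ha : a ∈ Algebra.adjoin K s := hs ▸ Algebra.mem_top
  induction ha using Algebra.adjoin_induction with
  | mem x hx => exact span_le (Ideal.subset_span hx)
  | algebraMap k => exact le_sup_left (a := (1 : Submodule K A)) (Submodule.algebraMap_mem k)
  | add x y _ _ hx hy => exact S.add_mem hx hy
  | mul x y _ _ hx hy =>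
    obtain ⟨_, hk, b, hb, rfl⟩ := Submodule.mem_sup.mp hy
    obtain ⟨k, rfl⟩ := Submodule.mem_one.mp hk
    rw [mul_add, ← Algebra.commutes, ← Algebra.smul_def]
    exact S.add_mem (S.smul_mem k hx) (span_le (Ideal.mul_mem_left _ x hb))

variable {I : Ideal A} (hI : Codisjoint 1 (I.restrictScalars K))
include hI

theorem exists_sub_algebraMap_mem_of_codisjoint_one (a : A) :
    ∃ k : K, a - algebraMap K A k ∈ I := by
  obtain ⟨_, hk, b, hb, rfl⟩ := Submodule.mem_sup.mp (hI.eq_top ▸ Submodule.mem_top (x := a))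
  obtain ⟨k, rfl⟩ := Submodule.mem_one.mp hk
  exact ⟨k, by simpa using hb⟩

theorem isTwoSided_of_codisjoint_one : I.IsTwoSided where
  mul_mem_of_left {b} a hb := by
    obtain ⟨k, hk⟩ := exists_sub_algebraMap_mem_of_codisjoint_one hI a
    have hsplit : k • b + b * (a - algebraMap K A k) = b * a := by
      rw [mul_sub, ← Algebra.commutes, ← Algebra.smul_def, add_sub_cancel]
    exact hsplit ▸ I.add_mem (I.smul_of_tower_mem k hb) (I.mul_mem_left b hk)

variable {M : Type*} [AddCommGroup M] [Module K M] [Module A M] [IsScalarTower K A M]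

theorem exists_restrictScalars_eq_of_smul_top_le {Q : Submodule K M}
    (hQ : (I • ⊤ : Submodule A M).restrictScalars K ≤ Q) :
    ∃ q : Submodule A M, q.restrictScalars K = Q := by
  refine ⟨{ Q with smul_mem' := fun a m hm => ?_ }, rfl⟩
  obtain ⟨k, hk⟩ := exists_sub_algebraMap_mem_of_codisjoint_one hI a
  have hsub : (a - algebraMap K A k) • m ∈ (I • ⊤ : Submodule A M) :=
    Submodule.smul_mem_smul hk Submodule.mem_top
  have hsplit : k • m + (a - algebraMap K A k) • m = a • m := by
    rw [sub_smul, algebraMap_smul, add_sub_cancel]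
  exact hsplit ▸ Q.add_mem (Q.smul_mem k hm) (hQ hsub)

theorem restrictScalars_span_singleton_of_le_torsionOf {x : M} (hx : I ≤ Ideal.torsionOf A M x) :
    (A ∙ x).restrictScalars K = K ∙ x := by
  refine le_antisymm (fun y hy => ?_) (Submodule.span_le_restrictScalars K A {x})
  obtain ⟨a, rfl⟩ := Submodule.mem_span_singleton.mp hy
  obtain ⟨k, hk⟩ := exists_sub_algebraMap_mem_of_codisjoint_one hI a
  have : (a - algebraMap K A k) • x = 0 := hx hk
  rw [sub_smul, algebraMap_smul, sub_eq_zero] at this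
  exact Submodule.mem_span_singleton.mpr ⟨k, this.symm⟩

theorem torsionOf_eq_of_le_torsionOf [IsDomain K] [Module.IsTorsionFree K M] {x : M}
    (hx : I ≤ Ideal.torsionOf A M x) (hx0 : x ≠ 0) : Ideal.torsionOf A M x = I := by
  refine le_antisymm (fun a ha => ?_) hx
  obtain ⟨k, hk⟩ := exists_sub_algebraMap_mem_of_codisjoint_one hI a
  have hkx : k • x = 0 := by
    have : (a - algebraMap K A k) • x = 0 := hx hk
    rwa [sub_smul, algebraMap_smul, (Ideal.mem_torsionOf_iff x a).mp ha, zero_sub,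
      neg_eq_zero] at this
  have hk0 : k = 0 := (smul_eq_zero.mp hkx).resolve_right hx0
  simpa [hk0] using hk

end CodisjointOne

section Summand

variable {K A M : Type*} [Field K] [Ring A] [Algebra K A] [AddCommGroup M] [Module K M]
  [Module A M] [IsScalarTower K A M] {I : Ideal A} (hI : Codisjoint 1 (I.restrictScalars K))
include hI

theorem exists_isCompl_span_singleton {x : M} (hx : I ≤ Ideal.torsionOf A M x)
    (hxI : x ∉ (I • ⊤ : Submodule A M)) : ∃ q : Submodule A M, IsCompl (A ∙ x) q := by
  have hdisj : Disjoint ((I • ⊤ : Submodule A M).restrictScalars K) (K ∙ x) :=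
    Submodule.disjoint_span_singleton.mpr fun h => absurd h hxI
  obtain ⟨Q, hIQ, hQ⟩ := hdisj.exists_isCompl
  obtain ⟨q, rfl⟩ := exists_restrictScalars_eq_of_smul_top_le hI hIQ
  rw [← restrictScalars_span_singleton_of_le_torsionOf hI hx,
    Submodule.isCompl_restrictScalars_iff] at hQ
  exact ⟨q, hQ.symm⟩

theorem exists_isCompl_equiv_quotient {x : M} (hx : I ≤ Ideal.torsionOf A M x)
    (hxI : x ∉ (I • ⊤ : Submodule A M)) :
    ∃ p q : Submodule A M, IsCompl p q ∧ Nonempty (p ≃ₗ[A] A ⧸ I) := by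
  have hx0 : x ≠ 0 := fun h => hxI (h ▸ zero_mem _)
  obtain ⟨q, hq⟩ := exists_isCompl_span_singleton hI hx hxI
  exact ⟨A ∙ x, q, hq, ⟨(Ideal.quotTorsionOfEquivSpanSingleton A M x).symm.trans
    (Submodule.quotEquivOfEq _ _ (torsionOf_eq_of_le_torsionOf hI hx hx0))⟩⟩

end Summand

section Rank

universe u

theorem rank_quotient_iInf_ker_le {R ι : Type*} {V W : Type u} [Ring R] [StrongRankCondition R]
    [Fintype ι] [AddCommGroup V] [Module R V] [AddCommGroup W] [Module R W] [Module.Free R W]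
    (f : ι → V →ₗ[R] W) :
    Module.rank R (V ⧸ ⨅ i, (f i).ker) ≤ Fintype.card ι * Module.rank R W := by
  have hinj := LinearMap.ker_eq_bot.mp (Submodule.ker_liftQ_eq_bot' _ (LinearMap.pi f) rfl)
  have hlift := LinearMap.lift_rank_le_of_injective _ hinj
  rw [rank_fun_eq_lift_mul, LinearMap.ker_pi] at hlift
  exact Cardinal.lift_le.mp (by simpa using hlift)

variable {K A ι : Type*} {M : Type u} [Field K] [Ring A] [Algebra K A] [AddCommGroup M]
  [Module K M] [Module A M] [IsScalarTower K A M] [Fintype ι]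

theorem exists_notMem_smul_top_of_card_mul_rank_lt (g : ι → A)
    (h : Fintype.card ι *
        Module.rank K ((Ideal.span (Set.range g) • ⊤ : Submodule A M).restrictScalars K) <
      Module.rank K (M ⧸ (Ideal.span (Set.range g) • ⊤ : Submodule A M).restrictScalars K)) :
    ∃ x : M, Ideal.span (Set.range g) ≤ Ideal.torsionOf A M x ∧
      x ∉ (Ideal.span (Set.range g) • ⊤ : Submodule A M) := by
  set N : Submodule A M := Ideal.span (Set.range g) • ⊤
  have smul_mem (i : ι) (m : M) : g i • m ∈ N :=
    Submodule.smul_mem_smul (Ideal.subset_span ⟨i, rfl⟩) Submodule.mem_top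
  let f (i : ι) : M →ₗ[K] N.restrictScalars K :=
    (Algebra.lsmul K K M (g i)).codRestrict _ (smul_mem i)
  obtain ⟨x, hx, hxN⟩ : ∃ x ∈ ⨅ i, (f i).ker, x ∉ N.restrictScalars K := by
    refine SetLike.not_le_iff_exists.mp fun hle => h.not_ge ?_
    exact (LinearMap.rank_le_of_surjective _ (Submodule.factor_surjective hle)).trans
      (rank_quotient_iInf_ker_le f)
  refine ⟨x, Ideal.span_le.mpr ?_, hxN⟩
  rintro _ ⟨i, rfl⟩
  exact congrArg Subtype.val ((Submodule.mem_iInf _).mp hx i)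

theorem stmt16_general {g : ι → A} (hg : Algebra.adjoin K (Set.range g) = ⊤)
    (h : Fintype.card ι *
        Module.rank K ((Ideal.span (Set.range g) • ⊤ : Submodule A M).restrictScalars K) <
      Module.rank K (M ⧸ (Ideal.span (Set.range g) • ⊤ : Submodule A M).restrictScalars K)) :
    ∃ p q : Submodule A M, IsCompl p q ∧
      Nonempty (p ≃ₗ[A] A ⧸ Ideal.span (Set.range g)) := by
  obtain ⟨x, hx, hxI⟩ := exists_notMem_smul_top_of_card_mul_rank_lt g h
  exact exists_isCompl_equiv_quotient (codisjoint_one_span_of_adjoin_eq_top hg) hx hxI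

end Rank

section TruncAlg

variable (K : Type*) [Field K] (r L : ℕ)

theorem adjoin_range_gen : Algebra.adjoin K (Set.range (gen K r L)) = ⊤ := by
  let π : FreeAlgebra K (Fin r) →ₐ[K] TruncAlg K r L := RingQuot.mkAlgHom K (TruncRel K r L)
  have hπ : Function.Surjective π := RingQuot.mkAlgHom_surjective K _
  have hrange : Set.range (gen K r L) = π '' Set.range (FreeAlgebra.ι K) := Set.range_comp _ _
  rw [hrange, ← AlgHom.map_adjoin, FreeAlgebra.adjoin_range_ι, Algebra.map_top,
    (AlgHom.range_eq_top π).mpr hπ]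

theorem gen_mem_jrad (i : Fin r) : gen K r L i ∈ Jrad K r L := by
  have := Submodule.mul_mem_mul (Submodule.mul_mem_mul (Submodule.mem_top (R := K) (x := 1))
    (Submodule.subset_span (Set.mem_range_self (f := gen K r L) i))) (Submodule.mem_top (x := 1))
  rwa [one_mul, mul_one] at this

theorem jrad_le_span_gen :
    Jrad K r L ≤ (Ideal.span (Set.range (gen K r L))).restrictScalars K := by
  set I := Ideal.span (Set.range (gen K r L))
  have : I.IsTwoSided :=
    isTwoSided_of_codisjoint_one (codisjoint_one_span_of_adjoin_eq_top (adjoin_range_gen K r L))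
  have hspan : Submodule.span K (Set.range (gen K r L)) ≤ I.restrictScalars K :=
    Submodule.span_le_restrictScalars K _ _
  have hleft : ⊤ * Submodule.span K (Set.range (gen K r L)) ≤ I.restrictScalars K :=
    Submodule.mul_le.mpr fun a _ s hs => I.mul_mem_left a (hspan hs)
  exact Submodule.mul_le.mpr fun b hb c _ => I.mul_mem_right c (hleft hb)

theorem jpow_one (M : Type*) [AddCommGroup M] [Module K M] [Module (TruncAlg K r L) M]
    [IsScalarTower K (TruncAlg K r L) M] :
    jpow K r L M 1 = Ideal.span (Set.range (gen K r L)) • ⊤ := by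
  refine le_antisymm (Submodule.span_le.mpr ?_) (Submodule.smul_le.mpr fun a ha m _ => ?_)
  · rintro _ ⟨a, ha, m, rfl⟩
    exact Submodule.smul_mem_smul (jrad_le_span_gen K r L (pow_one (Jrad K r L) ▸ ha))
      Submodule.mem_top
  · have hgen : Set.range (gen K r L) ⊆
        (jpow K r L M 1).comap (LinearMap.toSpanSingleton (TruncAlg K r L) M m) := by
      rintro _ ⟨i, rfl⟩
      exact Submodule.subset_span ⟨_, (pow_one (Jrad K r L)).symm ▸ gen_mem_jrad K r L i, m, rfl⟩
    exact Ideal.span_le.mpr hgen ha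

end TruncAlg

/-- Let `Λ'` be the local truncated path algebra with `r` loops and Loewy
length `2` (so square-zero radical `J'`).  If `M` is a finite-dimensional `Λ'`-module with
`dim_K(M/J'M) > r · dim_K(J'M)`, then `M` has a direct summand isomorphic to the unique
simple `Λ'`-module `Λ'/J'`. -/
theorem stmt16 (K : Type) [Field K] [IsAlgClosed K] (r : ℕ) (hr : 0 < r)
    (M : Type) [AddCommGroup M] [Module K M] [Module (TruncAlg K r 1) M]
    [IsScalarTower K (TruncAlg K r 1) M] [FiniteDimensional K M]
    (h : r * Module.finrank K ↥((jpow K r 1 M 1).restrictScalars K) <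
      Module.finrank K (M ⧸ (jpow K r 1 M 1).restrictScalars K)) :
    ∃ p q : Submodule (TruncAlg K r 1) M, IsCompl p q ∧
      Nonempty (↥p ≃ₗ[TruncAlg K r 1]
        (TruncAlg K r 1 ⧸ Submodule.span (TruncAlg K r 1) (Set.range (gen K r 1)))) := by
  rw [jpow_one] at h
  exact stmt16_general (adjoin_range_gen K r 1)
    (by simpa [← Module.finrank_eq_rank] using mod_cast h)
end
end
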